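/- arXiv:math/0112163 — 3 statements merged into one kernel-verified Lean document; each statement's English description precedes it below -/
import Mathlib

section
/- Let V : ℝ → ℝ be smooth and let γ = (y, ν, μ) : I → ℝ³ be an integral curve of W on an interval I, i.e. γ′(t) = W(γ(t)) = (2μ(t), 2μ(t)², −(V′(y(t)) + 2ν(t)μ(t))). Then: (a) p∘γ is constant on I, i.e. W is tangent to each level surface Σ(λ) of p; (b) (ν∘γ)′(t) = 2μ(t)² ≥ 0, so ν is nondecreasing along every integral curve of W; (c) if ν∘γ is constant on some nontrivial subinterval, then γ is constant there, equal to a zero q of W (so that μ = 0 and V′(y) = 0 at q); in particular W has no nonconstant periodic integral curves. -/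
/-!
Along an integral curve of the rescaled Hamilton field, `ν` has derivative `2‖μ‖² ≥ 0`. Where `ν` is
constant, `μ` therefore vanishes identically, hence so does its derivative `-∇V(y)`. The field then
vanishes along the whole curve, which stands still; no uniqueness theorem for integral curves is
involved. A monotone periodic function is constant, which excludes nonconstant periodic orbits.
-/

open Set
open scoped Gradient

section Calculus

variable {𝕜 F G : Type*} [NormedAddCommGroup F] [NormedAddCommGroup G]

theorem eq_of_hasDerivWithinAt_zero [RCLike 𝕜] [NormedSpace 𝕜 F] {f : 𝕜 → F} {s : Set 𝕜}
    (hs : Convex ℝ s) (hf : ∀ x ∈ s, HasDerivWithinAt f 0 s x) {x y : 𝕜} (hx : x ∈ s)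
    (hy : y ∈ s) : f x = f y := by
  have hdist : ‖f x - f y‖ ≤ 0 * ‖x - y‖ :=
    hs.norm_image_sub_le_of_norm_hasDerivWithin_le hf (fun _ _ ↦ norm_zero.le) hy hx
  rwa [zero_mul, norm_le_zero_iff, sub_eq_zero] at hdist

variable [NontriviallyNormedField 𝕜] [NormedSpace 𝕜 F] [NormedSpace 𝕜 G]

theorem eq_zero_of_hasDerivWithinAt_of_const {f : 𝕜 → F} {f' c : F} {s : Set 𝕜} {x : 𝕜}
    (hs : UniqueDiffWithinAt 𝕜 s x) (hx : x ∈ s) (hc : ∀ y ∈ s, f y = c)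
    (hf : HasDerivWithinAt f f' s x) : f' = 0 :=
  hs.eq_deriv s hf ((hasDerivWithinAt_const x s c).congr hc (hc x hx))

theorem hasDerivWithinAt_fst {f : 𝕜 → F × G} {f' : F × G} {s : Set 𝕜} {x : 𝕜}
    (hf : HasDerivWithinAt f f' s x) : HasDerivWithinAt (fun t ↦ (f t).1) f'.1 s x := by
  simpa using hf.hasFDerivWithinAt.fst.hasDerivWithinAt

theorem hasDerivWithinAt_snd {f : 𝕜 → F × G} {f' : F × G} {s : Set 𝕜} {x : 𝕜}
    (hf : HasDerivWithinAt f f' s x) : HasDerivWithinAt (fun t ↦ (f t).2) f'.2 s x := by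
  simpa using hf.hasFDerivWithinAt.snd.hasDerivWithinAt

end Calculus

theorem eq_of_monotone_of_periodic {α β : Type*} [AddCommGroup α] [LinearOrder α]
    [IsOrderedAddMonoid α] [Archimedean α] [PartialOrder β] {f : α → β} {c : α} (hf : Monotone f)
    (hc : 0 < c) (hper : Function.Periodic f c) (x y : α) : f x = f y := by
  obtain ⟨z, ⟨hxz, hzx⟩, hyz⟩ := hper.exists_mem_Ico hc y x
  rw [hyz]
  exact (hf hxz).antisymm ((hf hzx.le).trans_eq (hper x))

section HamiltonField

variable {E : Type*} [NormedAddCommGroup E] [InnerProductSpace ℝ E]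

/-- The energy function `p(y, ν, μ) = ν² + ‖μ‖² + V(y)`. Its level sets are the characteristic
varieties `Σ(λ)` of `Δ + V` at spatial infinity. -/
def energy (V : E → ℝ) (q : E × ℝ × E) : ℝ :=
  q.2.1 ^ 2 + ‖q.2.2‖ ^ 2 + V q.1

variable [CompleteSpace E]

/-- The rescaled Hamilton vector field `W(y, ν, μ) = (2μ, 2‖μ‖², -(∇V(y) + 2νμ))`, on the phase
space with base any real Hilbert space; its zeros are the radial points. -/
noncomputable def hamiltonField (V : E → ℝ) (q : E × ℝ × E) : E × ℝ × E :=
  ((2 : ℝ) • q.2.2, 2 * ‖q.2.2‖ ^ 2, -(∇ V q.1 + (2 * q.2.1) • q.2.2))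

variable {V : E → ℝ} {γ : ℝ → E × ℝ × E} {I : Set ℝ} {t : ℝ}

theorem hamiltonField_eq_zero_iff {q : E × ℝ × E} :
    hamiltonField V q = 0 ↔ q.2.2 = 0 ∧ ∇ V q.1 = 0 := by
  simp +contextual [hamiltonField, Prod.ext_iff]

theorem hasDerivWithinAt_position (hγ : IsIntegralCurveOn γ (fun _ ↦ hamiltonField V) I)
    (ht : t ∈ I) : HasDerivWithinAt (fun s ↦ (γ s).1) ((2 : ℝ) • (γ t).2.2) I t :=
  hasDerivWithinAt_fst (hγ t ht)

theorem hasDerivWithinAt_radialMomentum (hγ : IsIntegralCurveOn γ (fun _ ↦ hamiltonField V) I)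
    (ht : t ∈ I) : HasDerivWithinAt (fun s ↦ (γ s).2.1) (2 * ‖(γ t).2.2‖ ^ 2) I t :=
  hasDerivWithinAt_fst (hasDerivWithinAt_snd (hγ t ht))

theorem hasDerivWithinAt_tangentialMomentum (hγ : IsIntegralCurveOn γ (fun _ ↦ hamiltonField V) I)
    (ht : t ∈ I) : HasDerivWithinAt (fun s ↦ (γ s).2.2)
      (-(∇ V (γ t).1 + (2 * (γ t).2.1) • (γ t).2.2)) I t :=
  hasDerivWithinAt_snd (hasDerivWithinAt_snd (hγ t ht))

theorem hasDerivWithinAt_energy_zero (hV : DifferentiableAt ℝ V (γ t).1)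
    (hγ : IsIntegralCurveOn γ (fun _ ↦ hamiltonField V) I) (ht : t ∈ I) :
    HasDerivWithinAt (fun s ↦ energy V (γ s)) 0 I t := by
  have hpotential := hV.hasGradientAt.hasFDerivAt.comp_hasDerivWithinAt t
    (hasDerivWithinAt_position hγ ht)
  refine (((hasDerivWithinAt_radialMomentum hγ ht).fun_pow 2).add
    (hasDerivWithinAt_tangentialMomentum hγ ht).norm_sq |>.add hpotential).congr_deriv ?_
  simp only [InnerProductSpace.toDual_apply_apply, inner_neg_right, inner_add_right,
    inner_smul_right, real_inner_self_eq_norm_sq, real_inner_comm (γ t).2.2]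
  ring

theorem energy_eq_of_isIntegralCurveOn (hV : Differentiable ℝ V) (hI : I.OrdConnected)
    (hγ : IsIntegralCurveOn γ (fun _ ↦ hamiltonField V) I) {s t : ℝ} (hs : s ∈ I) (ht : t ∈ I) :
    energy V (γ s) = energy V (γ t) :=
  eq_of_hasDerivWithinAt_zero hI.convex (fun _ ↦ hasDerivWithinAt_energy_zero (hV _) hγ) hs ht

theorem monotoneOn_radialMomentum (hI : I.OrdConnected)
    (hγ : IsIntegralCurveOn γ (fun _ ↦ hamiltonField V) I) :
    MonotoneOn (fun t ↦ (γ t).2.1) I :=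
  monotoneOn_of_hasDerivWithinAt_nonneg hI.convex
    (fun _ ht ↦ (hasDerivWithinAt_radialMomentum hγ ht).continuousWithinAt)
    (fun _ ht ↦ (hasDerivWithinAt_radialMomentum hγ (interior_subset ht)).mono interior_subset)
    (fun _ _ ↦ by positivity)

theorem hamiltonField_eq_zero_of_radialMomentum_const (hI : UniqueDiffOn ℝ I)
    (hγ : IsIntegralCurveOn γ (fun _ ↦ hamiltonField V) I) {c : ℝ}
    (hν : ∀ t ∈ I, (γ t).2.1 = c) (ht : t ∈ I) : hamiltonField V (γ t) = 0 := by
  have hμ : ∀ s ∈ I, (γ s).2.2 = 0 := fun s hs ↦ by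
    simpa using
      eq_zero_of_hasDerivWithinAt_of_const (hI s hs) hs hν (hasDerivWithinAt_radialMomentum hγ hs)
  have hgrad : -(∇ V (γ t).1 + (2 * (γ t).2.1) • (γ t).2.2) = 0 :=
    eq_zero_of_hasDerivWithinAt_of_const (hI t ht) ht hμ (hasDerivWithinAt_tangentialMomentum hγ ht)
  rw [hμ t ht, smul_zero, add_zero, neg_eq_zero] at hgrad
  exact hamiltonField_eq_zero_iff.mpr ⟨hμ t ht, hgrad⟩

theorem eq_of_radialMomentum_const (hI : I.OrdConnected) (hdiff : UniqueDiffOn ℝ I)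
    (hγ : IsIntegralCurveOn γ (fun _ ↦ hamiltonField V) I) {c : ℝ}
    (hν : ∀ t ∈ I, (γ t).2.1 = c) {s t : ℝ} (hs : s ∈ I) (ht : t ∈ I) : γ s = γ t :=
  eq_of_hasDerivWithinAt_zero hI.convex
    (fun r hr ↦ hamiltonField_eq_zero_of_radialMomentum_const hdiff hγ hν hr ▸ hγ r hr) hs ht

theorem eq_of_periodic_isIntegralCurve (hγ : IsIntegralCurve γ (fun _ ↦ hamiltonField V)) {T : ℝ}
    (hT : 0 < T) (hper : Function.Periodic γ T) (s t : ℝ) : γ s = γ t := by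
  have hγ := hγ.isIntegralCurveOn univ
  have hmono : Monotone fun t ↦ (γ t).2.1 :=
    monotoneOn_univ.mp (monotoneOn_radialMomentum ordConnected_univ hγ)
  have hν (r : ℝ) : (γ r).2.1 = (γ 0).2.1 :=
    eq_of_monotone_of_periodic hmono hT (hper.comp fun q ↦ q.2.1) r 0
  exact eq_of_radialMomentum_const ordConnected_univ uniqueDiffOn_univ hγ (fun r _ ↦ hν r)
    (mem_univ s) (mem_univ t)

theorem stmt_4_general (hV : Differentiable ℝ V) (hI : I.OrdConnected)
    (hγ : IsIntegralCurveOn γ (fun _ ↦ hamiltonField V) I) :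
    (∀ s ∈ I, ∀ t ∈ I, energy V (γ s) = energy V (γ t)) ∧
    MonotoneOn (fun t ↦ (γ t).2.1) I ∧
    (∀ t₁ ∈ I, ∀ t₂ ∈ I, t₁ < t₂ → (∀ s ∈ Icc t₁ t₂, (γ s).2.1 = (γ t₁).2.1) →
      ∀ s ∈ Icc t₁ t₂, γ s = γ t₁ ∧ hamiltonField V (γ s) = 0) ∧
    (I = univ → ∀ T > 0, Function.Periodic γ T → ∀ s t, γ s = γ t) := by
  refine ⟨fun s hs t ht ↦ energy_eq_of_isIntegralCurveOn hV hI hγ hs ht,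
    monotoneOn_radialMomentum hI hγ, fun t₁ ht₁ t₂ ht₂ hlt hν s hs ↦ ?_, ?_⟩
  · have hγ := hγ.mono (hI.out ht₁ ht₂)
    have hdiff := uniqueDiffOn_Icc hlt
    exact ⟨eq_of_radialMomentum_const ordConnected_Icc hdiff hγ hν hs (left_mem_Icc.mpr hlt.le),
      hamiltonField_eq_zero_of_radialMomentum_const hdiff hγ hν hs⟩
  · rintro rfl T hT hper s t
    exact eq_of_periodic_isIntegralCurve (isIntegralCurveOn_univ.mp hγ) hT hper s t

end HamiltonField

theorem isIntegralCurveOn_hamiltonField_real {V y ν μ : ℝ → ℝ} {I : Set ℝ}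
    (hy : ∀ t ∈ I, HasDerivWithinAt y (2 * μ t) I t)
    (hν : ∀ t ∈ I, HasDerivWithinAt ν (2 * μ t ^ 2) I t)
    (hμ : ∀ t ∈ I, HasDerivWithinAt μ (-(deriv V (y t) + 2 * ν t * μ t)) I t) :
    IsIntegralCurveOn (fun t ↦ (y t, ν t, μ t)) (fun _ ↦ hamiltonField V) I := fun t ht ↦ by
  simpa [hamiltonField, gradient_eq_deriv'] using (hy t ht).prodMk ((hν t ht).prodMk (hμ t ht))

/-- along any integral curve of
`W(y,ν,μ) = (2μ, 2μ², −(V′(y) + 2νμ))` the energy `p = ν² + μ² + V(y)` is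
conserved, `ν` is nondecreasing, and if `ν` is constant on a nontrivial
subinterval then the curve is constant there, equal to a zero of `W`; in
particular `W` has no nonconstant periodic integral curves. -/
theorem stmt_4 (V : ℝ → ℝ) (hV : ContDiff ℝ (⊤ : ℕ∞) V)
    (I : Set ℝ) (hI : I.OrdConnected)
    (y ν μ : ℝ → ℝ)
    (hy : ∀ t ∈ I, HasDerivAt y (2 * μ t) t)
    (hν : ∀ t ∈ I, HasDerivAt ν (2 * μ t ^ 2) t)
    (hμ : ∀ t ∈ I, HasDerivAt μ (-(deriv V (y t) + 2 * ν t * μ t)) t) :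
    (∀ s ∈ I, ∀ t ∈ I,
        ν s ^ 2 + μ s ^ 2 + V (y s) = ν t ^ 2 + μ t ^ 2 + V (y t)) ∧
    MonotoneOn ν I ∧
    (∀ t₁ ∈ I, ∀ t₂ ∈ I, t₁ < t₂ → (∀ s ∈ Set.Icc t₁ t₂, ν s = ν t₁) →
      ∀ s ∈ Set.Icc t₁ t₂,
        y s = y t₁ ∧ ν s = ν t₁ ∧ μ s = μ t₁ ∧ μ s = 0 ∧ deriv V (y s) = 0) ∧
    (I = Set.univ → ∀ T > (0 : ℝ),
      (∀ t, y (t + T) = y t ∧ ν (t + T) = ν t ∧ μ (t + T) = μ t) →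
      ∀ s t : ℝ, y s = y t ∧ ν s = ν t ∧ μ s = μ t) := by
  have hγ := isIntegralCurveOn_hamiltonField_real (fun t ht ↦ (hy t ht).hasDerivWithinAt)
    (fun t ht ↦ (hν t ht).hasDerivWithinAt) fun t ht ↦ (hμ t ht).hasDerivWithinAt
  simpa [energy, hamiltonField_eq_zero_iff, gradient_eq_deriv', Function.Periodic, and_assoc]
    using stmt_4_general (hV.differentiable (by simp)) hI hγ
end

section
/- Let r₁ < 0, let n ≥ 0 be an integer, let x₀ > 0, y₀ > 0, and U = (0, x₀] × [−y₀, y₀]. Let v : U → ℂ be smooth and set f(x, y) = x ∂_x v(x, y) + r₁ y ∂_y v(x, y). Suppose there exist C ≥ 0, ρ > −(n−1)r₁ and s > −n r₁ such that |∂_y^k v(x, y)| ≤ C x^ρ and |∂_y^k f(x, y)| ≤ C x^s for all (x, y) ∈ U and all 0 ≤ k ≤ n + 1. Then there exists a constant a_n ∈ ℂ such that for every r′ < min(−(n+1)r₁, s) there is C′ ≥ 0 with |v(x, y) − a_n x^{−n r₁} y^n| ≤ C′ x^{r′} for all (x, y) ∈ U. -/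
/-!
The curves `x ^ (-r) * y = w` are the integral curves of `x ∂ₓ + r y ∂_y`, and along each of them
`v` changes by `∫ f dt / t`. Following the curve through `(x, y)` forward until it leaves the
rectangle at `x = x₀` therefore expresses `v (x, y)` by the values of `v` on `{x = x₀}` minus
`∫ f (t, t ^ r w) dt / t` over `[x, x₀]`. Taylor expand both terms in `y` and sort by powers of `w`.
The coefficient of `w ^ k` in the integrand is `O(t ^ (s + k r - 1))`, which for `k ≤ n` is
integrable at `t = 0` because `-n r < s`; completing these integrals to `[0, x₀]` costs only
`O(x ^ s)`. Hence `v = ∑ k ≤ n, w ^ k a_k + O(x ^ q)` for every `q ≤ s` with `q < -(n + 1) r`.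
Since `w ^ k` has size `x ^ (-k r)` on the edge `y = y₀`, the growth bound on `v` forces `a_k = 0`
for `k < n`.
-/

open Asymptotics Filter MeasureTheory Set Topology

section
variable {E : Type*} [NormedAddCommGroup E]

lemma isBigO_rpow_rpow_of_le {b q r : ℝ} (h : r ≤ q) :
    (fun x : ℝ => x ^ q) =O[𝓟 (Ioc 0 b)] fun x => x ^ r := by
  refine IsBigO.of_bound (b ^ (q - r)) (eventually_principal.2 fun x hx => ?_)
  rw [Real.norm_of_nonneg (Real.rpow_nonneg hx.1.le _),
    Real.norm_of_nonneg (Real.rpow_nonneg hx.1.le _)]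
  calc x ^ q = x ^ (q - r) * x ^ r := by rw [← Real.rpow_add hx.1, sub_add_cancel]
    _ ≤ b ^ (q - r) * x ^ r :=
      mul_le_mul_of_nonneg_right (Real.rpow_le_rpow hx.1.le hx.2 (sub_nonneg.2 h))
        (Real.rpow_nonneg hx.1.le r)

lemma isBigO_principal_iff_of_nonneg {α : Type*} {s : Set α} {u : α → E} {g : α → ℝ}
    (hg : ∀ a ∈ s, 0 ≤ g a) :
    u =O[𝓟 s] g ↔ ∃ C : ℝ, 0 ≤ C ∧ ∀ a ∈ s, ‖u a‖ ≤ C * g a := by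
  constructor
  · intro h
    obtain ⟨C, hC, hle⟩ := h.exists_nonneg
    refine ⟨C, hC, fun a ha => ?_⟩
    simpa only [Real.norm_of_nonneg (hg a ha)] using isBigOWith_principal.1 hle a ha
  · rintro ⟨C, -, hle⟩
    exact isBigO_principal.2 ⟨C, fun a ha => by
      simpa only [Real.norm_of_nonneg (hg a ha)] using hle a ha⟩

lemma intervalIntegrable_of_isBigO_rpow {g : ℝ → E} {b p : ℝ} (hb : 0 ≤ b) (hp : 0 < p)
    (hmeas : AEStronglyMeasurable g (volume.restrict (Ioc 0 b)))
    (hg : g =O[𝓟 (Ioc 0 b)] fun t => t ^ (p - 1)) : IntervalIntegrable g volume 0 b := by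
  obtain ⟨C, hC⟩ := isBigO_principal.1 hg
  rw [intervalIntegrable_iff_integrableOn_Ioc_of_le hb]
  have hrpow : IntervalIntegrable (fun t : ℝ => t ^ (p - 1)) volume 0 b :=
    intervalIntegral.intervalIntegrable_rpow' (by linarith)
  exact (hrpow.1.norm.const_mul C).mono' hmeas
    ((ae_restrict_mem measurableSet_Ioc).mono hC)

variable [NormedSpace ℝ E]

lemma eq_zero_of_isBigO_rpow_smul {c : E} {μ e : ℝ} (hμ : μ < e)
    (h : (fun x : ℝ => x ^ μ • c) =O[𝓝[>] 0] fun x => x ^ e) : c = 0 := by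
  have hconst : (fun _ : ℝ => c) =O[𝓝[>] 0] fun x : ℝ => x ^ (e - μ) := by
    refine ((isBigO_refl (fun x : ℝ => x ^ (-μ)) _).smul h).congr' ?_ ?_ <;>
      filter_upwards [self_mem_nhdsWithin] with x hx
    · rw [smul_smul, ← Real.rpow_add hx, neg_add_cancel, Real.rpow_zero, one_smul]
    · rw [smul_eq_mul, ← Real.rpow_add hx, neg_add_eq_sub]
  have hlim : Tendsto (fun x : ℝ => x ^ (e - μ)) (𝓝[>] 0) (𝓝 0) := by
    simpa [(sub_pos.2 hμ).ne'] using
      (Real.continuousAt_rpow_const 0 (e - μ) (Or.inr (sub_pos.2 hμ).le)).tendsto.mono_left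
        nhdsWithin_le_nhds
  exact tendsto_nhds_unique tendsto_const_nhds (hconst.trans_tendsto hlim)

lemma eq_zero_of_isBigO_sum_rpow_smul {μ : ℕ → ℝ} (hμ : StrictMono μ) {c : ℕ → E} {n : ℕ} {e : ℝ}
    (he : ∀ k < n, μ k < e)
    (h : (fun x : ℝ => ∑ k ∈ Finset.range n, x ^ μ k • c k) =O[𝓝[>] 0] fun x => x ^ e) :
    ∀ k < n, c k = 0 := by
  induction n generalizing e with
  | zero => simp
  | succ n ih =>
    have hlast : (fun x : ℝ => x ^ μ n • c n) =O[𝓝[>] 0] fun x => x ^ μ n :=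
      IsBigO.of_bound ‖c n‖ (.of_forall fun x => by rw [norm_smul, mul_comm])
    have hdom : (fun x : ℝ => x ^ e) =O[𝓝[>] 0] fun x => x ^ μ n :=
      (isBigO_rpow_rpow_of_le (b := 1) (he n n.lt_succ_self).le).mono
        (le_principal_iff.2 (Ioc_mem_nhdsGT one_pos))
    have hinit : ∀ k < n, c k = 0 := ih (fun k hk => hμ hk) <| by
      simpa only [Finset.sum_range_succ, add_sub_cancel_right] using (h.trans hdom).sub hlast
    have hsum (x : ℝ) : ∑ k ∈ Finset.range (n + 1), x ^ μ k • c k = x ^ μ n • c n := by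
      rw [Finset.sum_range_succ, Finset.sum_eq_zero fun k hk => by
        rw [hinit k (Finset.mem_range.1 hk), smul_zero], zero_add]
    intro k hk
    obtain hk | rfl := Nat.lt_succ_iff_lt_or_eq.1 hk
    · exact hinit k hk
    · exact eq_zero_of_isBigO_rpow_smul (he k hk) (h.congr_left hsum)

lemma isBigO_integral_of_isBigO_rpow {g : ℝ → E} {b p : ℝ} (hp : 0 < p)
    (hg : g =O[𝓟 (Ioc 0 b)] fun t => t ^ (p - 1)) :
    (fun x => ∫ t in 0..x, g t) =O[𝓟 (Ioc 0 b)] fun x => x ^ p := by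
  obtain ⟨C, hC⟩ := isBigO_principal.1 hg
  refine IsBigO.of_bound (C / p) (eventually_principal.2 fun x hx => ?_)
  have hbound : ∀ t ∈ Ioc 0 x, ‖g t‖ ≤ C * t ^ (p - 1) := fun t ht => by
    simpa only [Real.norm_of_nonneg (Real.rpow_nonneg ht.1.le _)]
      using hC t ⟨ht.1, ht.2.trans hx.2⟩
  calc ‖∫ t in 0..x, g t‖ ≤ ∫ t in 0..x, C * t ^ (p - 1) :=
        intervalIntegral.norm_integral_le_of_norm_le hx.1.le (ae_of_all _ hbound)
          ((intervalIntegral.intervalIntegrable_rpow' (by linarith)).const_mul C)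
    _ = C / p * ‖x ^ p‖ := by
        rw [intervalIntegral.integral_const_mul, integral_rpow (Or.inl (by linarith)),
          sub_add_cancel, Real.zero_rpow hp.ne', Real.norm_of_nonneg (Real.rpow_nonneg hx.1.le p)]
        ring

lemma norm_integral_le_of_norm_le_rpow {g : ℝ → E} {x b q C : ℝ} (hx : 0 < x) (hxb : x ≤ b)
    (hq : q < 0) (hC : 0 ≤ C) (hg : ∀ t ∈ Ioc x b, ‖g t‖ ≤ C * t ^ (q - 1)) :
    ‖∫ t in x..b, g t‖ ≤ C / (-q) * x ^ q := by
  have h0 : (0 : ℝ) ∉ uIcc x b := by rw [uIcc_of_le hxb]; exact fun h => hx.not_ge h.1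
  calc ‖∫ t in x..b, g t‖ ≤ ∫ t in x..b, C * t ^ (q - 1) :=
        intervalIntegral.norm_integral_le_of_norm_le hxb (ae_of_all _ hg)
          ((intervalIntegral.intervalIntegrable_rpow (Or.inr h0)).const_mul C)
    _ = C / (-q) * (x ^ q - b ^ q) := by
        rw [intervalIntegral.integral_const_mul, integral_rpow (Or.inr ⟨by linarith, h0⟩),
          sub_add_cancel]
        field_simp
        ring
    _ ≤ C / (-q) * x ^ q := by
        have := Real.rpow_nonneg (hx.le.trans hxb) q
        have := neg_pos.2 hq
        gcongr
        linarith

lemma taylorWithinEval_eq_sum (g : ℝ → E) (n : ℕ) (s : Set ℝ) (x₀ x : ℝ) :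
    taylorWithinEval g n s x₀ x =
      ∑ k ∈ Finset.range (n + 1), (x - x₀) ^ k • taylorCoeffWithin g k s x₀ := by
  simp only [taylor_within_apply, taylorCoeffWithin, smul_smul, mul_comm]

lemma norm_sub_taylorWithinEval_univ_le {g : ℝ → E} {n : ℕ} {x₀ x M : ℝ}
    (hg : ContDiff ℝ (n + 1) g) (hM : ∀ y ∈ uIcc x₀ x, ‖iteratedDeriv (n + 1) g y‖ ≤ M) :
    ‖g x - taylorWithinEval g n univ x₀ x‖ ≤ M * |x - x₀| ^ (n + 1) / n.factorial := by
  set G : ℝ → E := fun u => g (x₀ + (x - x₀) * u) with hG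
  have hGsmooth : ContDiff ℝ (n + 1) G := hg.comp (by fun_prop)
  have hderiv (m : ℕ) (hm : m ≤ n + 1) (u : ℝ) (hu : u ∈ Icc (0 : ℝ) 1) :
      iteratedDerivWithin m G (Icc 0 1) u =
        (x - x₀) ^ m • iteratedDeriv m g (x₀ + (x - x₀) * u) := by
    have hm' : (m : WithTop ℕ∞) ≤ n + 1 := by exact_mod_cast hm
    rw [iteratedDerivWithin_eq_iteratedDeriv (uniqueDiffOn_Icc one_pos)
      (hGsmooth.of_le hm').contDiffAt hu, hG,
      iteratedDeriv_comp_const_smul (f := fun z => g (x₀ + z)) ((hg.of_le hm').comp (by fun_prop)),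
      iteratedDeriv_comp_const_add]
  have hbound : ∀ u ∈ Icc (0 : ℝ) 1,
      ‖iteratedDerivWithin (n + 1) G (Icc 0 1) u‖ ≤ M * |x - x₀| ^ (n + 1) := fun u hu => by
    rw [hderiv _ le_rfl u hu, norm_smul, norm_pow, Real.norm_eq_abs, mul_comm]
    gcongr
    refine hM _ ?_
    simpa only [smul_eq_mul, mul_comm] using
      (convex_uIcc x₀ x).add_smul_sub_mem left_mem_uIcc right_mem_uIcc hu
  have htaylor : taylorWithinEval G n (Icc 0 1) 0 1 = taylorWithinEval g n univ x₀ x := by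
    simp only [taylor_within_apply]
    refine Finset.sum_congr rfl fun k hk => ?_
    rw [hderiv k (by grind) 0 (by simp), iteratedDerivWithin_univ, smul_smul]
    simp
  have hG1 : G 1 = g x := by simp [hG]
  simpa only [hG1, htaylor, sub_zero, one_pow, mul_one] using
    taylor_mean_remainder_bound zero_le_one hGsmooth.contDiffOn (right_mem_Icc.2 zero_le_one) hbound

lemma isBigO_sub_taylorWithinEval_univ {g : ℝ → E} {n : ℕ} (hg : ContDiff ℝ (n + 1) g) (R : ℝ) :
    (fun y => g y - taylorWithinEval g n univ 0 y) =O[𝓟 (Icc (-R) R)] fun y => y ^ (n + 1) := by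
  obtain ⟨M, hM⟩ := (isCompact_Icc (a := -R) (b := R)).exists_bound_of_continuousOn
    (hg.continuous_iteratedDeriv' (n + 1)).continuousOn
  refine IsBigO.of_bound (M / n.factorial) (eventually_principal.2 fun y hy => ?_)
  have hR : 0 ≤ R := (abs_nonneg y).trans (abs_le.2 hy)
  have := norm_sub_taylorWithinEval_univ_le hg fun z hz =>
    hM z (uIcc_subset_Icc ⟨neg_nonpos.2 hR, hR⟩ hy hz)
  rwa [sub_zero, mul_div_right_comm, ← Real.norm_eq_abs, ← norm_pow] at this

lemma aestronglyMeasurable_iteratedDeriv_param {α : Type*} [MeasurableSpace α] {μ : Measure α}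
    {F : α → ℝ → E} {O : Set ℝ} (hO : IsOpen O) {k : ℕ} (hF : ∀ᵐ a ∂μ, ContDiff ℝ k (F a))
    (hmeas : ∀ y ∈ O, AEStronglyMeasurable (fun a => F a y) μ) :
    ∀ y ∈ O, AEStronglyMeasurable (fun a => iteratedDeriv k (F a) y) μ := by
  induction k with
  | zero => simpa only [iteratedDeriv_zero] using hmeas
  | succ k ih =>
    intro y hy
    have ih := ih (hF.mono fun a ha => ha.of_le (by exact_mod_cast k.le_succ))
    have hle : 𝓝[≠] y ≤ 𝓝 y := nhdsWithin_le_nhds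
    have : (comap ((↑) : O → ℝ) (𝓝[≠] y)).NeBot :=
      comap_coe_neBot_of_le_principal (hle.trans (le_principal_iff.2 (hO.mem_nhds hy)))
    refine aestronglyMeasurable_of_tendsto_ae (comap ((↑) : O → ℝ) (𝓝[≠] y))
      (f := fun z a => slope (iteratedDeriv k (F a)) y z)
      (fun z => ((ih z z.2).sub (ih y hy)).const_smul _) ?_
    filter_upwards [hF] with a ha
    have hderiv : HasDerivAt (iteratedDeriv k (F a)) (iteratedDeriv (k + 1) (F a) y) y := by
      rw [iteratedDeriv_succ]
      exact (ha.differentiable_iteratedDeriv k (by exact_mod_cast k.lt_succ_self) y).hasDerivAt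
    exact (hasDerivAt_iff_tendsto_slope.1 hderiv).comp tendsto_comap

/-- The domain `U = (0, x₀] × [-y₀, y₀]` of the transport problem. -/
abbrev transportRect (x₀ y₀ : ℝ) : Set (ℝ × ℝ) := Ioc 0 x₀ ×ˢ Icc (-y₀) y₀

/-- The transport equation `x ∂ₓv + r y ∂_y v = f` on `U`: the left-hand side is the derivative of
`v` at `(x, y)` in the direction `(x, r y)`. -/
def HasTransportDerivOn (r : ℝ) (v f : ℝ × ℝ → E) (U : Set (ℝ × ℝ)) : Prop :=
  ∀ p ∈ U, ∃ L : ℝ × ℝ →L[ℝ] E, HasFDerivAt v L p ∧ f p = L (p.1, r * p.2)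

/-- The function `w = x ^ (-r) * y`, which is constant along the flow of `x ∂ₓ + r y ∂_y`; its
powers are the homogeneous solutions of the transport equation. -/
noncomputable def transportInvariant (r : ℝ) (p : ℝ × ℝ) : ℝ := p.1 ^ (-r) * p.2

/-- The integral curve `x ^ (-r) * y = w` of `x ∂ₓ + r y ∂_y`, parametrized by `t = x` rather than
by the time of the flow, so that `d/dt` is `t⁻¹` times the transport operator. -/
noncomputable def transportCurve (r w t : ℝ) : ℝ × ℝ := (t, t ^ r * w)

variable {r x₀ y₀ : ℝ} {v f : ℝ × ℝ → E} {n : ℕ}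

lemma transportInvariant_pow {p : ℝ × ℝ} (hp : 0 ≤ p.1) (k : ℕ) :
    transportInvariant r p ^ k = p.1 ^ (-(k : ℝ) * r) * p.2 ^ k := by
  rw [transportInvariant, mul_pow, ← Real.rpow_mul_natCast hp, neg_mul, neg_mul, mul_comm r]

lemma tendsto_fst_transportRect :
    Tendsto Prod.fst (𝓟 (transportRect x₀ y₀)) (𝓟 (Ioc 0 x₀)) :=
  tendsto_principal_principal.2 fun _ hp => hp.1

lemma isBigO_transportInvariant_pow (r x₀ y₀ : ℝ) (k : ℕ) :
    (fun p => transportInvariant r p ^ k) =O[𝓟 (transportRect x₀ y₀)]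
      fun p => p.1 ^ (-(k : ℝ) * r) := by
  refine IsBigO.of_bound (y₀ ^ k) (eventually_principal.2 fun p hp => ?_)
  rw [transportInvariant_pow hp.1.1.le, norm_mul, mul_comm, norm_pow, Real.norm_eq_abs p.2]
  gcongr
  exact abs_le.2 hp.2

lemma transportCurve_transportInvariant {p : ℝ × ℝ} (hp : 0 < p.1) :
    transportCurve r (transportInvariant r p) p.1 = p := by
  rw [transportCurve, transportInvariant, ← mul_assoc, ← Real.rpow_add hp, add_neg_cancel,
    Real.rpow_zero, one_mul]

lemma transportCurve_mem_transportRect (hr : r ≤ 0) {p : ℝ × ℝ} (hp : p ∈ transportRect x₀ y₀)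
    {t : ℝ} (ht : t ∈ Icc p.1 x₀) :
    transportCurve r (transportInvariant r p) t ∈ transportRect x₀ y₀ := by
  have hx : 0 < p.1 := hp.1.1
  have ht0 : 0 < t := hx.trans_le ht.1
  refine ⟨⟨ht0, ht.2⟩, abs_le.1 ?_⟩
  calc |t ^ r * transportInvariant r p|
      ≤ p.1 ^ r * |transportInvariant r p| := by
        rw [abs_mul, abs_of_nonneg (Real.rpow_nonneg ht0.le r)]
        exact mul_le_mul_of_nonneg_right (Real.rpow_le_rpow_of_nonpos hx ht.1 hr) (abs_nonneg _)
    _ = |(transportCurve r (transportInvariant r p) p.1).2| := by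
        rw [transportCurve, abs_mul, abs_of_nonneg (Real.rpow_nonneg hx.le r)]
    _ ≤ y₀ := by
        rw [transportCurve_transportInvariant hx]
        exact abs_le.2 hp.2

lemma hasDerivAt_comp_transportCurve {w t : ℝ} {L : ℝ × ℝ →L[ℝ] E} (ht : t ≠ 0)
    (hv : HasFDerivAt v L (transportCurve r w t)) :
    HasDerivAt (fun t => v (transportCurve r w t)) (t⁻¹ • L (t, r * (t ^ r * w))) t := by
  have hcurve : HasDerivAt (transportCurve r w) (1, r * t ^ (r - 1) * w) t :=
    (hasDerivAt_id t).prodMk ((Real.hasDerivAt_rpow_const (Or.inl ht)).mul_const w)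
  refine (hv.comp_hasDerivAt t hcurve).congr_deriv ?_
  rw [← map_smul, Prod.smul_mk, smul_eq_mul, smul_eq_mul, inv_mul_cancel₀ ht,
    Real.rpow_sub_one ht]
  congr 2
  field_simp

lemma intervalIntegrable_transportCurve (hr : r ≤ 0) (hf : ContinuousOn f (transportRect x₀ y₀))
    {p : ℝ × ℝ} (hp : p ∈ transportRect x₀ y₀) :
    IntervalIntegrable (fun t => t⁻¹ • f (transportCurve r (transportInvariant r p) t))
      volume p.1 x₀ := by
  have hne : ∀ t ∈ Icc p.1 x₀, t ≠ 0 := fun t ht => (hp.1.1.trans_le ht.1).ne'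
  have hcurve : ContinuousOn (transportCurve r (transportInvariant r p)) (Icc p.1 x₀) :=
    continuousOn_id.prodMk
      ((continuousOn_id.rpow_const fun t ht => Or.inl (hne t ht)).mul continuousOn_const)
  apply ContinuousOn.intervalIntegrable
  rw [uIcc_of_le hp.1.2]
  exact (continuousOn_id.inv₀ hne).smul
    (hf.comp hcurve fun t ht => transportCurve_mem_transportRect hr hp ht)

lemma integral_transportCurve [CompleteSpace E] (hr : r ≤ 0)
    (hv : HasTransportDerivOn r v f (transportRect x₀ y₀))
    (hf : ContinuousOn f (transportRect x₀ y₀)) {p : ℝ × ℝ} (hp : p ∈ transportRect x₀ y₀) :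
    ∫ t in p.1..x₀, t⁻¹ • f (transportCurve r (transportInvariant r p) t) =
      v (transportCurve r (transportInvariant r p) x₀) - v p := by
  rw [intervalIntegral.integral_eq_sub_of_hasDerivAt
    (f := fun t => v (transportCurve r (transportInvariant r p) t)) (fun t ht => ?_)
    (intervalIntegrable_transportCurve hr hf hp), transportCurve_transportInvariant hp.1.1]
  rw [uIcc_of_le hp.1.2] at ht
  obtain ⟨L, hL, hfL⟩ := hv _ (transportCurve_mem_transportRect hr hp ht)
  rw [hfL]
  have ht0 : 0 < t := hp.1.1.trans_le ht.1
  exact hasDerivAt_comp_transportCurve (ne_of_gt ht0) hL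

/-- The coefficient of `w ^ k` in the formal expansion of `t⁻¹ f (t, t ^ r w)`, the integrand of the
transport equation along the integral curve with invariant `w`. -/
noncomputable def sourceCoeff (r : ℝ) (f : ℝ × ℝ → E) (k : ℕ) (t : ℝ) : E :=
  t ^ (k * r - 1) • taylorCoeffWithin (fun y => f (t, y)) k univ 0

/-- The coefficient of `(x ^ (-r) * y) ^ k` in the expansion of `v` at `x = 0`: the contribution of
the `k`-th Taylor coefficient of `v` on `{x = x₀}`, corrected by the source. When
`sourceCoeff r f k` is not integrable on `(0, x₀]` the integral has the junk value `0`. -/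
noncomputable def outgoingCoeff (r x₀ : ℝ) (v f : ℝ × ℝ → E) (k : ℕ) : E :=
  x₀ ^ (k * r) • taylorCoeffWithin (fun y => v (x₀, y)) k univ 0 - ∫ t in 0..x₀, sourceCoeff r f k t

lemma aestronglyMeasurable_sourceCoeff (hy₀ : 0 < y₀) (hf : ContinuousOn f (transportRect x₀ y₀))
    {k : ℕ} (hsmooth : ∀ x ∈ Ioc 0 x₀, ContDiff ℝ k fun y => f (x, y)) :
    AEStronglyMeasurable (sourceCoeff r f k) (volume.restrict (Ioc 0 x₀)) := by
  have hslice : ∀ y ∈ Ioo (-y₀) y₀,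
      AEStronglyMeasurable (fun t => f (t, y)) (volume.restrict (Ioc 0 x₀)) := fun y hy =>
    (hf.comp (by fun_prop) fun t ht => ⟨ht, Ioo_subset_Icc_self hy⟩).aestronglyMeasurable
      measurableSet_Ioc
  have hderiv := aestronglyMeasurable_iteratedDeriv_param isOpen_Ioo
    ((ae_restrict_mem measurableSet_Ioc).mono hsmooth) hslice 0 ⟨neg_neg_iff_pos.2 hy₀, hy₀⟩
  have hcoeff : sourceCoeff r f k = fun t =>
      t ^ (k * r - 1) • (k.factorial : ℝ)⁻¹ • iteratedDeriv k (fun y => f (t, y)) 0 :=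
    funext fun t => by rw [sourceCoeff, taylorCoeffWithin, iteratedDerivWithin_univ]
  rw [hcoeff]
  exact (by fun_prop : Measurable fun t : ℝ => t ^ (k * r - 1)).aestronglyMeasurable.smul
    (hderiv.const_smul _)

lemma isBigO_sourceCoeff (r : ℝ) (hy₀ : 0 ≤ y₀) {s : ℝ} {k : ℕ}
    (hf : (fun p => iteratedDeriv k (fun y => f (p.1, y)) p.2) =O[𝓟 (transportRect x₀ y₀)]
      fun p => p.1 ^ s) :
    sourceCoeff r f k =O[𝓟 (Ioc 0 x₀)] fun t => t ^ (s + k * r - 1) := by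
  have haxis : Tendsto (fun t : ℝ => (t, (0 : ℝ))) (𝓟 (Ioc 0 x₀)) (𝓟 (transportRect x₀ y₀)) :=
    tendsto_principal_principal.2 fun t ht => ⟨ht, neg_nonpos.2 hy₀, hy₀⟩
  have hcoeff : (fun t => taylorCoeffWithin (fun y => f (t, y)) k univ 0)
      =O[𝓟 (Ioc 0 x₀)] fun t => t ^ s := by
    simp only [taylorCoeffWithin, iteratedDerivWithin_univ]
    exact (hf.comp_tendsto haxis).const_smul_left _
  refine ((isBigO_refl (fun t : ℝ => t ^ (k * r - 1)) _).smul hcoeff).congr' (.refl _ _) ?_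
  filter_upwards [mem_principal_self _] with t ht
  rw [smul_eq_mul, ← Real.rpow_add ht.1]
  congr 1
  ring

lemma taylorWithinEval_rpow_mul (g : ℝ → E) (n : ℕ) (r w : ℝ) {t : ℝ} (ht : 0 ≤ t) :
    taylorWithinEval g n univ 0 (t ^ r * w) =
      ∑ k ∈ Finset.range (n + 1), w ^ k • t ^ (k * r) • taylorCoeffWithin g k univ 0 := by
  simp only [taylorWithinEval_eq_sum, sub_zero, mul_pow, smul_smul, mul_comm (_ : ℝ) r,
    Real.rpow_mul_natCast ht, mul_comm]

lemma sum_pow_smul_sourceCoeff (r : ℝ) (f : ℝ × ℝ → E) (n : ℕ) (w : ℝ) {t : ℝ} (ht : 0 < t) :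
    ∑ k ∈ Finset.range (n + 1), w ^ k • sourceCoeff r f k t =
      t⁻¹ • taylorWithinEval (fun y => f (t, y)) n univ 0 (t ^ r * w) := by
  rw [taylorWithinEval_rpow_mul _ n r w ht.le, Finset.smul_sum]
  refine Finset.sum_congr rfl fun k _ => ?_
  rw [sourceCoeff, Real.rpow_sub_one ht.ne', div_eq_mul_inv, smul_smul, smul_smul, smul_smul]
  congr 1
  ring

/-- What remains of the integrand `t⁻¹ f (t, t ^ r w)` after subtracting its expansion in powers of
`w` up to order `n`. -/
noncomputable def sourceRemainder (r : ℝ) (f : ℝ × ℝ → E) (n : ℕ) (w t : ℝ) : E :=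
  t⁻¹ • f (transportCurve r w t) - ∑ k ∈ Finset.range (n + 1), w ^ k • sourceCoeff r f k t

lemma norm_sourceRemainder_le {C s w t : ℝ}
    (hsmooth : ∀ x ∈ Ioc 0 x₀, ContDiff ℝ (n + 1) fun y => f (x, y))
    (hC : ∀ p ∈ transportRect x₀ y₀,
      ‖iteratedDeriv (n + 1) (fun y => f (p.1, y)) p.2‖ ≤ C * p.1 ^ s)
    (hmem : transportCurve r w t ∈ transportRect x₀ y₀) :
    ‖sourceRemainder r f n w t‖ ≤ C * |w| ^ (n + 1) * t ^ (s + (n + 1) * r - 1) := by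
  obtain ⟨ht, hy⟩ := hmem
  have ht0 : 0 < t := ht.1
  have hy₀ : 0 ≤ y₀ := (abs_nonneg _).trans (abs_le.2 hy)
  have hderiv : ∀ y ∈ uIcc 0 (t ^ r * w),
      ‖iteratedDeriv (n + 1) (fun y => f (t, y)) y‖ ≤ C * t ^ s := fun y hyw =>
    hC (t, y) ⟨ht, uIcc_subset_Icc ⟨neg_nonpos.2 hy₀, hy₀⟩ hy hyw⟩
  have hM : 0 ≤ C * t ^ s := (norm_nonneg _).trans (hderiv 0 left_mem_uIcc)
  have hpow : t ^ (s + (n + 1) * r - 1) = t⁻¹ * (t ^ s * (t ^ r) ^ (n + 1)) := by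
    rw [← Real.rpow_mul_natCast ht0.le, ← Real.rpow_add ht0, ← Real.rpow_neg_one,
      ← Real.rpow_add ht0]
    congr 1
    push_cast
    ring
  rw [sourceRemainder, sum_pow_smul_sourceCoeff r f n w ht0, ← smul_sub, norm_smul, norm_inv,
    Real.norm_of_nonneg ht0.le]
  calc t⁻¹ * ‖f (t, t ^ r * w) - taylorWithinEval (fun y => f (t, y)) n univ 0 (t ^ r * w)‖
      ≤ t⁻¹ * (C * t ^ s * |t ^ r * w| ^ (n + 1)) := by
        gcongr
        have := norm_sub_taylorWithinEval_univ_le (hsmooth t ht) hderiv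
        rw [sub_zero] at this
        exact this.trans (div_le_self (by positivity)
          (by exact_mod_cast Nat.one_le_iff_ne_zero.2 n.factorial_ne_zero))
    _ = C * |w| ^ (n + 1) * t ^ (s + (n + 1) * r - 1) := by
        rw [hpow, abs_mul, abs_of_pos (Real.rpow_pos_of_pos ht0 r), mul_pow]
        ring

lemma isBigO_integral_sourceRemainder (hr : r ≤ 0) {s q : ℝ} (hqs : q ≤ s)
    (hqn : q < -((n : ℝ) + 1) * r)
    (hsmooth : ∀ x ∈ Ioc 0 x₀, ContDiff ℝ (n + 1) fun y => f (x, y))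
    (hf : (fun p => iteratedDeriv (n + 1) (fun y => f (p.1, y)) p.2)
      =O[𝓟 (transportRect x₀ y₀)] fun p => p.1 ^ s) :
    (fun p => ∫ t in p.1..x₀, sourceRemainder r f n (transportInvariant r p) t)
      =O[𝓟 (transportRect x₀ y₀)] fun p => p.1 ^ q := by
  obtain ⟨C, hC, hfC⟩ := (isBigO_principal_iff_of_nonneg fun p hp =>
    Real.rpow_nonneg hp.1.1.le s).1 hf
  obtain ⟨K, hK, hpow⟩ := (isBigO_principal_iff_of_nonneg fun t ht =>
    Real.rpow_nonneg (mem_Ioc.1 ht).1.le (q + (n + 1) * r - 1)).1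
      (isBigO_rpow_rpow_of_le (b := x₀) (by linarith : _ ≤ s + (n + 1) * r - 1))
  have hneg : q + (n + 1) * r < 0 := by linarith
  have htail : (fun p => ∫ t in p.1..x₀, sourceRemainder r f n (transportInvariant r p) t)
      =O[𝓟 (transportRect x₀ y₀)]
        fun p => transportInvariant r p ^ (n + 1) * p.1 ^ (q + (n + 1) * r) := by
    refine IsBigO.of_bound (C * K / -(q + (n + 1) * r)) (eventually_principal.2 fun p hp => ?_)
    set w := transportInvariant r p
    have hbound : ∀ t ∈ Ioc p.1 x₀, ‖sourceRemainder r f n w t‖ ≤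
        C * K * |w| ^ (n + 1) * t ^ (q + (n + 1) * r - 1) := fun t ht => by
      have ht0 : t ∈ Ioc 0 x₀ := ⟨hp.1.1.trans ht.1, ht.2⟩
      calc ‖sourceRemainder r f n w t‖ ≤ C * |w| ^ (n + 1) * t ^ (s + (n + 1) * r - 1) :=
            norm_sourceRemainder_le hsmooth hfC
              (transportCurve_mem_transportRect hr hp (Ioc_subset_Icc_self ht))
        _ ≤ C * |w| ^ (n + 1) * (K * t ^ (q + (n + 1) * r - 1)) := by
            gcongr
            exact (le_abs_self _).trans (hpow t ht0)
        _ = C * K * |w| ^ (n + 1) * t ^ (q + (n + 1) * r - 1) := by ring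
    refine (norm_integral_le_of_norm_le_rpow hp.1.1 hp.1.2 hneg (by positivity) hbound).trans_eq ?_
    rw [norm_mul, norm_pow, Real.norm_eq_abs w,
      Real.norm_of_nonneg (Real.rpow_nonneg hp.1.1.le _)]
    ring
  refine htail.trans (((isBigO_transportInvariant_pow r x₀ y₀ (n + 1)).mul
    (isBigO_refl _ _)).congr' (.refl _ _) ?_)
  filter_upwards [mem_principal_self _] with p hp
  rw [← Real.rpow_add hp.1.1]
  congr 1
  push_cast
  ring

lemma sub_sum_outgoingCoeff_eq [CompleteSpace E] (hr : r ≤ 0)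
    (hv : HasTransportDerivOn r v f (transportRect x₀ y₀))
    (hf : ContinuousOn f (transportRect x₀ y₀))
    (hint : ∀ k ≤ n, IntervalIntegrable (sourceCoeff r f k) volume 0 x₀)
    {p : ℝ × ℝ} (hp : p ∈ transportRect x₀ y₀) :
    v p - ∑ k ∈ Finset.range (n + 1), transportInvariant r p ^ k • outgoingCoeff r x₀ v f k =
      (v (transportCurve r (transportInvariant r p) x₀) -
        taylorWithinEval (fun y => v (x₀, y)) n univ 0 (x₀ ^ r * transportInvariant r p)) +
      (∑ k ∈ Finset.range (n + 1),
        transportInvariant r p ^ k • ∫ t in 0..p.1, sourceCoeff r f k t) -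
      ∫ t in p.1..x₀, sourceRemainder r f n (transportInvariant r p) t := by
  have hcurve := integral_transportCurve hr hv hf hp
  set w := transportInvariant r p
  have hx₀ : 0 ≤ x₀ := hp.1.1.le.trans hp.1.2
  have hhead (k : ℕ) (hk : k ∈ Finset.range (n + 1)) :
      IntervalIntegrable (sourceCoeff r f k) volume 0 p.1 :=
    (hint k (by grind)).mono_set (by grind [uIcc_of_le])
  have htail (k : ℕ) (hk : k ∈ Finset.range (n + 1)) :
      IntervalIntegrable (sourceCoeff r f k) volume p.1 x₀ :=
    (hhead k hk).symm.trans (hint k (by grind))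
  have hterm : ∀ k ∈ Finset.range (n + 1),
      IntervalIntegrable (fun t => w ^ k • sourceCoeff r f k t) volume p.1 x₀ :=
    fun k hk => (htail k hk).smul _
  have hrem : ∫ t in p.1..x₀, sourceRemainder r f n w t = v (transportCurve r w x₀) - v p -
      ∑ k ∈ Finset.range (n + 1), w ^ k • ∫ t in p.1..x₀, sourceCoeff r f k t := by
    simp only [sourceRemainder]
    rw [intervalIntegral.integral_sub (intervalIntegrable_transportCurve hr hf hp)
      (by simpa only [Finset.sum_fn] using IntervalIntegrable.sum _ hterm), hcurve,
      intervalIntegral.integral_finsetSum hterm]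
    simp only [intervalIntegral.integral_smul]
  have hsplit : ∑ k ∈ Finset.range (n + 1), w ^ k • outgoingCoeff r x₀ v f k =
      taylorWithinEval (fun y => v (x₀, y)) n univ 0 (x₀ ^ r * w) -
        ∑ k ∈ Finset.range (n + 1), w ^ k • (∫ t in 0..p.1, sourceCoeff r f k t) -
        ∑ k ∈ Finset.range (n + 1), w ^ k • ∫ t in p.1..x₀, sourceCoeff r f k t := by
    rw [taylorWithinEval_rpow_mul _ n r w hx₀, ← Finset.sum_sub_distrib, ← Finset.sum_sub_distrib]
    refine Finset.sum_congr rfl fun k hk => ?_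
    rw [outgoingCoeff, ← intervalIntegral.integral_add_adjacent_intervals (hhead k hk) (htail k hk),
      smul_sub, smul_add, sub_sub]
  rw [hrem, hsplit]
  abel

lemma isBigO_exit_sub_taylorWithinEval (hr : r ≤ 0) (hv : ContDiff ℝ (n + 1) fun y => v (x₀, y)) :
    (fun p => v (transportCurve r (transportInvariant r p) x₀) -
      taylorWithinEval (fun y => v (x₀, y)) n univ 0 (x₀ ^ r * transportInvariant r p))
      =O[𝓟 (transportRect x₀ y₀)] fun p => p.1 ^ (-((n : ℝ) + 1) * r) := by
  have hexit : Tendsto (fun p => x₀ ^ r * transportInvariant r p)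
      (𝓟 (transportRect x₀ y₀)) (𝓟 (Icc (-y₀) y₀)) :=
    tendsto_principal_principal.2 fun p hp =>
      (transportCurve_mem_transportRect hr hp (right_mem_Icc.2 hp.1.2)).2
  have hpow := (isBigO_transportInvariant_pow r x₀ y₀ (n + 1)).const_mul_left ((x₀ ^ r) ^ (n + 1))
  simp only [← mul_pow, Nat.cast_add_one] at hpow
  exact ((isBigO_sub_taylorWithinEval_univ hv y₀).comp_tendsto hexit).trans hpow

theorem isBigO_sub_sum_outgoingCoeff [CompleteSpace E] (hr : r < 0) (hx₀ : 0 < x₀) (hy₀ : 0 < y₀)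
    (hv : HasTransportDerivOn r v f (transportRect x₀ y₀))
    (hf : ContinuousOn f (transportRect x₀ y₀))
    (hvsmooth : ContDiff ℝ (n + 1) fun y => v (x₀, y))
    (hfsmooth : ∀ x ∈ Ioc 0 x₀, ContDiff ℝ (n + 1) fun y => f (x, y))
    {s q : ℝ} (hs : -(n : ℝ) * r < s)
    (hfbound : ∀ k ≤ n + 1, (fun p => iteratedDeriv k (fun y => f (p.1, y)) p.2)
      =O[𝓟 (transportRect x₀ y₀)] fun p => p.1 ^ s)
    (hqs : q ≤ s) (hqn : q < -((n : ℝ) + 1) * r) :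
    (fun p => v p - ∑ k ∈ Finset.range (n + 1),
      transportInvariant r p ^ k • outgoingCoeff r x₀ v f k)
      =O[𝓟 (transportRect x₀ y₀)] fun p => p.1 ^ q := by
  have hpow {a : ℝ} (ha : q ≤ a) : (fun p : ℝ × ℝ => p.1 ^ a) =O[𝓟 (transportRect x₀ y₀)]
      fun p => p.1 ^ q := (isBigO_rpow_rpow_of_le ha).comp_tendsto tendsto_fst_transportRect
  have hpos (k : ℕ) (hk : k ≤ n) : 0 < s + k * r := by
    have : (k : ℝ) ≤ n := by exact_mod_cast hk
    nlinarith
  have hcoeff (k : ℕ) (hk : k ≤ n) :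
      sourceCoeff r f k =O[𝓟 (Ioc 0 x₀)] fun t => t ^ (s + k * r - 1) :=
    isBigO_sourceCoeff r hy₀.le (hfbound k (by lia))
  have hint (k : ℕ) (hk : k ≤ n) : IntervalIntegrable (sourceCoeff r f k) volume 0 x₀ :=
    intervalIntegrable_of_isBigO_rpow hx₀.le (hpos k hk)
      (aestronglyMeasurable_sourceCoeff hy₀ hf fun x hx =>
        (hfsmooth x hx).of_le (by exact_mod_cast hk.trans n.le_succ)) (hcoeff k hk)
  have hhead (k : ℕ) (hk : k ≤ n) :
      (fun p => transportInvariant r p ^ k • ∫ t in 0..p.1, sourceCoeff r f k t)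
        =O[𝓟 (transportRect x₀ y₀)] fun p => p.1 ^ q := by
    refine (((isBigO_transportInvariant_pow r x₀ y₀ k).smul
      ((isBigO_integral_of_isBigO_rpow (hpos k hk) (hcoeff k hk)).comp_tendsto
        tendsto_fst_transportRect)).congr' (.refl _ _) ?_).trans (hpow hqs)
    filter_upwards [mem_principal_self _] with p hp
    rw [Function.comp_apply, smul_eq_mul, ← Real.rpow_add hp.1.1]
    congr 1
    ring
  have hsum := IsBigO.fun_sum (s := Finset.range (n + 1)) fun k hk =>
    hhead k (Nat.lt_succ_iff.1 (Finset.mem_range.1 hk))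
  have hexit := (isBigO_exit_sub_taylorWithinEval (y₀ := y₀) hr.le hvsmooth).trans (hpow hqn.le)
  have hrem := isBigO_integral_sourceRemainder hr.le hqs hqn hfsmooth (hfbound _ le_rfl)
  refine ((hexit.add hsum).sub hrem).congr' ?_ (.refl _ _)
  filter_upwards [mem_principal_self _] with p hp
  exact (sub_sum_outgoingCoeff_eq hr.le hv hf hint hp).symm

lemma eq_zero_of_isBigO_sub_sum_transportInvariant (hr : r < 0) (hx₀ : 0 < x₀) (hy₀ : 0 < y₀)
    {a : ℕ → E} {ρ : ℝ} (hρ : -((n : ℝ) - 1) * r < ρ)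
    (hv : v =O[𝓟 (transportRect x₀ y₀)] fun p => p.1 ^ ρ)
    (hexp : (fun p => v p - ∑ k ∈ Finset.range (n + 1), transportInvariant r p ^ k • a k)
      =O[𝓟 (transportRect x₀ y₀)] fun p => p.1 ^ (-(n : ℝ) * r)) :
    ∀ k < n, a k = 0 := by
  set e := min ρ (-(n : ℝ) * r)
  have hpow {q : ℝ} (hq : e ≤ q) : (fun p : ℝ × ℝ => p.1 ^ q) =O[𝓟 (transportRect x₀ y₀)]
      fun p => p.1 ^ e := (isBigO_rpow_rpow_of_le hq).comp_tendsto tendsto_fst_transportRect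
  have htop : (fun p => transportInvariant r p ^ n • a n) =O[𝓟 (transportRect x₀ y₀)]
      fun p => p.1 ^ (-(n : ℝ) * r) :=
    (IsBigO.of_bound ‖a n‖ (.of_forall fun p => by rw [norm_smul, mul_comm])).trans
      (isBigO_transportInvariant_pow r x₀ y₀ n)
  have hlow : (fun p => ∑ k ∈ Finset.range n, transportInvariant r p ^ k • a k)
      =O[𝓟 (transportRect x₀ y₀)] fun p => p.1 ^ e := by
    refine ((hv.trans (hpow (min_le_left _ _))).sub
      ((hexp.add htop).trans (hpow (min_le_right _ _)))).congr_left fun p => ?_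
    rw [Finset.sum_range_succ]
    abel
  have hedge : Tendsto (fun x : ℝ => (x, y₀)) (𝓝[>] 0) (𝓟 (transportRect x₀ y₀)) :=
    tendsto_principal.2 <| by
      filter_upwards [Ioc_mem_nhdsGT hx₀] with x hx using ⟨hx, by linarith, le_rfl⟩
  have hedgesum : (fun x : ℝ => ∑ k ∈ Finset.range n, x ^ (-(k : ℝ) * r) • y₀ ^ k • a k)
      =O[𝓝[>] 0] fun x => x ^ e := by
    refine (hlow.comp_tendsto hedge).congr' ?_ (.refl _ _)
    filter_upwards [self_mem_nhdsWithin] with x hx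
    simp only [Function.comp_apply, smul_smul, transportInvariant_pow (p := (x, y₀)) (le_of_lt hx)]
  have hmono : StrictMono fun k : ℕ => -(k : ℝ) * r := fun i j hij => by
    have : (i : ℝ) < j := by exact_mod_cast hij
    nlinarith
  have hlt (k : ℕ) (hk : k < n) : -(k : ℝ) * r < e := by
    have : (k : ℝ) + 1 ≤ n := by exact_mod_cast hk
    refine lt_min ?_ (hmono hk)
    nlinarith
  intro k hk
  exact (smul_eq_zero.1 (eq_zero_of_isBigO_sum_rpow_smul hmono hlt hedgesum k hk)).resolve_left
    (pow_pos hy₀ k).ne'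

theorem stmt_16_general [CompleteSpace E] (hr : r < 0) (hx₀ : 0 < x₀) (hy₀ : 0 < y₀)
    (hv : HasTransportDerivOn r v f (transportRect x₀ y₀))
    (hf : ContinuousOn f (transportRect x₀ y₀))
    (hvsmooth : ContDiff ℝ (n + 1) fun y => v (x₀, y))
    (hfsmooth : ∀ x ∈ Ioc 0 x₀, ContDiff ℝ (n + 1) fun y => f (x, y))
    {ρ s : ℝ} (hρ : -((n : ℝ) - 1) * r < ρ) (hs : -(n : ℝ) * r < s)
    (hvbound : v =O[𝓟 (transportRect x₀ y₀)] fun p => p.1 ^ ρ)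
    (hfbound : ∀ k ≤ n + 1, (fun p => iteratedDeriv k (fun y => f (p.1, y)) p.2)
      =O[𝓟 (transportRect x₀ y₀)] fun p => p.1 ^ s) :
    ∃ a : E, ∀ r' < min (-((n : ℝ) + 1) * r) s,
      (fun p => v p - (p.1 ^ (-(n : ℝ) * r) * p.2 ^ n) • a)
        =O[𝓟 (transportRect x₀ y₀)] fun p => p.1 ^ r' := by
  have hexp {q : ℝ} (hqs : q ≤ s) (hqn : q < -((n : ℝ) + 1) * r) :=
    isBigO_sub_sum_outgoingCoeff hr hx₀ hy₀ hv hf hvsmooth hfsmooth hs hfbound hqs hqn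
  have hzero : ∀ k < n, outgoingCoeff r x₀ v f k = 0 :=
    eq_zero_of_isBigO_sub_sum_transportInvariant hr hx₀ hy₀ hρ hvbound
      (hexp hs.le (by linarith))
  refine ⟨outgoingCoeff r x₀ v f n, fun r' hr' => ?_⟩
  obtain ⟨hr'n, hr's⟩ := lt_min_iff.1 hr'
  refine (hexp hr's.le hr'n).congr' ?_ (.refl _ _)
  filter_upwards [mem_principal_self _] with p hp
  rw [Finset.sum_range_succ, Finset.sum_eq_zero fun k hk => by
    rw [hzero k (Finset.mem_range.1 hk), smul_zero], zero_add, transportInvariant_pow hp.1.1.le]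

end

/-- general-`n` part of the transport lemma at an outgoing
saddle. If `v` is smooth on `U = (0,x₀] × [−y₀,y₀]`, `f = x ∂ₓv + r₁ y ∂_y v`,
and `|∂_y^k v| ≤ C x^ρ`, `|∂_y^k f| ≤ C x^s` for `0 ≤ k ≤ n+1`, with
`ρ > −(n−1)r₁` and `s > −n r₁`, then there is a constant `aₙ` with
`|v − aₙ x^{−n r₁} yⁿ| ≤ C′ x^{r′}` on `U` for every `r′ < min(−(n+1)r₁, s)`. -/
theorem stmt_16 (r₁ : ℝ) (hr : r₁ < 0) (n : ℕ) (x₀ y₀ : ℝ) (hx : 0 < x₀) (hy : 0 < y₀)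
    (v f : ℝ × ℝ → ℂ) (Dv : ℝ × ℝ → (ℝ × ℝ →L[ℝ] ℂ))
    (hdiff : ∀ p ∈ Set.Ioc (0 : ℝ) x₀ ×ˢ Set.Icc (-y₀) y₀, HasFDerivAt v (Dv p) p)
    (hcont : ContinuousOn Dv (Set.Ioc (0 : ℝ) x₀ ×ˢ Set.Icc (-y₀) y₀))
    (hysmooth : ∀ x ∈ Set.Ioc (0 : ℝ) x₀,
      ContDiff ℝ (⊤ : ℕ∞) (fun y => v (x, y)) ∧ ContDiff ℝ (⊤ : ℕ∞) (fun y => f (x, y)))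
    (hfdef : ∀ p ∈ Set.Ioc (0 : ℝ) x₀ ×ˢ Set.Icc (-y₀) y₀,
      f p = (p.1 : ℂ) * Dv p (1, 0) + (r₁ : ℂ) * (p.2 : ℂ) * Dv p (0, 1))
    (C ρ s : ℝ) (hC : 0 ≤ C)
    (hρ : -((n : ℝ) - 1) * r₁ < ρ) (hs : -(n : ℝ) * r₁ < s)
    (hbound : ∀ k ≤ n + 1, ∀ p ∈ Set.Ioc (0 : ℝ) x₀ ×ˢ Set.Icc (-y₀) y₀,
      ‖iteratedDeriv k (fun y => v (p.1, y)) p.2‖ ≤ C * p.1 ^ ρ ∧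
      ‖iteratedDeriv k (fun y => f (p.1, y)) p.2‖ ≤ C * p.1 ^ s) :
    ∃ a : ℂ, ∀ r' : ℝ, r' < min (-((n : ℝ) + 1) * r₁) s →
      ∃ C' : ℝ, 0 ≤ C' ∧
        ∀ p ∈ Set.Ioc (0 : ℝ) x₀ ×ˢ Set.Icc (-y₀) y₀,
          ‖v p - a * ((p.1 ^ (-(n : ℝ) * r₁) * p.2 ^ n : ℝ) : ℂ)‖ ≤ C' * p.1 ^ r' := by
  have hpos (q : ℝ) : ∀ p ∈ transportRect x₀ y₀, 0 ≤ p.1 ^ q := fun p hp =>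
    Real.rpow_nonneg hp.1.1.le q
  have hf : ∀ p ∈ transportRect x₀ y₀, f p = Dv p (p.1, r₁ * p.2) := fun p hp => by
    have hfield : (p.1, r₁ * p.2) = p.1 • ((1 : ℝ), (0 : ℝ)) + (r₁ * p.2) • ((0 : ℝ), (1 : ℝ)) := by
      simp
    rw [hfdef p hp, hfield, map_add, map_smul, map_smul, Complex.real_smul, Complex.real_smul,
      Complex.ofReal_mul]
  obtain ⟨a, ha⟩ := stmt_16_general hr hx hy
    (fun p hp => ⟨Dv p, hdiff p hp, hf p hp⟩)
    ((hcont.clm_apply (by fun_prop)).congr hf)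
    ((hysmooth x₀ ⟨hx, le_rfl⟩).1.of_le (by exact_mod_cast le_top))
    (fun x hx => (hysmooth x hx).2.of_le (by exact_mod_cast le_top)) hρ hs
    ((isBigO_principal_iff_of_nonneg (hpos ρ)).2 ⟨C, hC, fun p hp => (hbound 0 (by simp) p hp).1⟩)
    fun k hk => (isBigO_principal_iff_of_nonneg (hpos s)).2
      ⟨C, hC, fun p hp => (hbound k hk p hp).2⟩
  refine ⟨a, fun r' hr' => ?_⟩
  simpa only [Complex.real_smul, mul_comm a] using
    (isBigO_principal_iff_of_nonneg (hpos r')).1 (ha r' hr')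
end

section
/- Let V : ℝ → ℝ be C^∞ and 2π-periodic with every critical point nondegenerate (V′(y) = 0 implies V″(y) ≠ 0). Fix λ ∈ ℝ and ν̃ > 0, and set K = {y ∈ ℝ : V(y) ≤ λ − ν̃²}. Then there exists a C^∞, 2π-periodic function Ṽ : ℝ → ℝ, all of whose critical points are nondegenerate, such that: (a) Ṽ and V have exactly the same local minimum points, and Ṽ coincides with V on a neighborhood of each local minimum point; (b) Ṽ(y) ≥ V(y) for all y; (c) Ṽ = V on K; and (d) no value of Ṽ at a local maximum point lies in the open interval (λ − ν̃², λ). -/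
/-!
The potential is raised near one local maximum `m` with value in `(λ - ν̃², λ)` at a time, by
replacing it with `Φ ∘ V` on a small neighborhood `U` of `m`. Here `Φ : ℝ → ℝ` is smooth with
positive derivative, is the identity below a level that `V` does not reach on `∂U`, and takes `V m`
to `λ`. The result is everywhere locally a composition of `V` with such a `Φ`, so it has the same
local minima and maxima as `V`, and nondegeneracy and smoothness are inherited. Choosing `U` needs
only topology, so the argument is run on the circle, where `V` has finitely many local extrema
because nondegenerate critical points are isolated, and then pulled back to the line.
-/

open Filter Set Topology
open scoped ContDiff

theorem piecewise_eventuallyEq_of_eventuallyEq_frontier {X Y : Type*} [TopologicalSpace X]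
    {s : Set X} [DecidablePred (· ∈ s)] {f g : X → Y} (h : ∀ x ∈ frontier s, f =ᶠ[𝓝 x] g) (x : X) :
    (x ∈ s ∧ s.piecewise f g =ᶠ[𝓝 x] f) ∨ s.piecewise f g =ᶠ[𝓝 x] g := by
  by_cases hx : x ∈ frontier s
  · right
    filter_upwards [h x hx] with y hy
    by_cases hys : y ∈ s <;> simp [hys, hy]
  by_cases hxs : x ∈ interior s
  · left
    refine ⟨interior_subset hxs, ?_⟩
    filter_upwards [mem_interior_iff_mem_nhds.1 hxs] with y hy using s.piecewise_eq_of_mem f g hy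
  · right
    have hxc : sᶜ ∈ 𝓝 x := by
      rw [← mem_interior_iff_mem_nhds, interior_compl]
      exact fun hcl => hx ⟨hcl, hxs⟩
    filter_upwards [hxc] with y hy using s.piecewise_eq_of_notMem f g hy

section LocalExtr

variable {X Y β : Type*} [TopologicalSpace X] [TopologicalSpace Y]

theorem isLocalMin_strictMono_comp_iff {γ : Type*} [LinearOrder β] [Preorder γ] {Φ : β → γ}
    (hΦ : StrictMono Φ) {f : X → β} {x : X} : IsLocalMin (Φ ∘ f) x ↔ IsLocalMin f x := by
  simp only [IsLocalMin, IsMinFilter, Function.comp_apply, hΦ.le_iff_le]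

theorem isLocalMax_strictMono_comp_iff {γ : Type*} [LinearOrder β] [Preorder γ] {Φ : β → γ}
    (hΦ : StrictMono Φ) {f : X → β} {x : X} : IsLocalMax (Φ ∘ f) x ↔ IsLocalMax f x := by
  simp only [IsLocalMax, IsMaxFilter, Function.comp_apply, hΦ.le_iff_le]

theorem isLocalMin_comp_iff_of_isOpenMap [Preorder β] {π : Y → X} (hπ : Continuous π)
    (hπo : IsOpenMap π) {f : X → β} {y : Y} : IsLocalMin (f ∘ π) y ↔ IsLocalMin f (π y) := by
  simp only [IsLocalMin, IsMinFilter, ← hπo.map_nhds_eq hπ.continuousAt, eventually_map,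
    Function.comp_apply]

theorem isLocalMax_comp_iff_of_isOpenMap [Preorder β] {π : Y → X} (hπ : Continuous π)
    (hπo : IsOpenMap π) {f : X → β} {y : Y} : IsLocalMax (f ∘ π) y ↔ IsLocalMax f (π y) := by
  simp only [IsLocalMax, IsMaxFilter, ← hπo.map_nhds_eq hπ.continuousAt, eventually_map,
    Function.comp_apply]

theorem isLocalExtr_comp_iff_of_isOpenMap [Preorder β] {π : Y → X} (hπ : Continuous π)
    (hπo : IsOpenMap π) {f : X → β} {y : Y} : IsLocalExtr (f ∘ π) y ↔ IsLocalExtr f (π y) :=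
  or_congr (isLocalMin_comp_iff_of_isOpenMap hπ hπo) (isLocalMax_comp_iff_of_isOpenMap hπ hπo)

theorem eventually_lt_of_isLocalMax_of_isolated [PartialOrder β] {f : X → β} {m : X}
    (hm : IsLocalMax f m) (hiso : ∀ᶠ x in 𝓝[≠] m, ¬ IsLocalMax f x) :
    ∀ᶠ x in 𝓝[≠] m, f x < f m := by
  filter_upwards [hiso, hm.filter_mono nhdsWithin_le_nhds,
    (eventually_eventually_nhds.2 hm).filter_mono nhdsWithin_le_nhds] with x hx hle hle_near
  refine hle.lt_of_ne fun heq => hx ?_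
  filter_upwards [hle_near] with y hy using heq ▸ hy

theorem exists_isOpen_frontier_lt_of_eventually_lt [LocallyCompactSpace X] [T2Space X]
    {f : X → ℝ} (hf : Continuous f) {m : X} (hm : ∀ᶠ x in 𝓝[≠] m, f x < f m)
    {s : Set X} (hs : s ∈ 𝓝 m) {c : ℝ} (hc : c < f m) :
    ∃ U ⊆ s, IsOpen U ∧ m ∈ U ∧ ∃ a ∈ Ioo c (f m), ∀ x ∈ frontier U, f x < a := by
  obtain ⟨K, ⟨hK, hKc⟩, hKs⟩ := (compact_basis_nhds m).mem_iff.1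
    (inter_mem hs (eventually_nhdsWithin_iff.1 hm))
  have hmU : m ∈ interior K := mem_interior_iff_mem_nhds.2 hK
  have hfrontier : ∀ x ∈ frontier (interior K), f x < f m := fun x hx =>
    (hKs (hKc.isClosed.frontier_subset (frontier_interior_subset hx))).2
      fun hxm : x = m => hx.2 (by rwa [interior_interior, hxm])
  have hcompact : IsCompact (frontier (interior K)) :=
    hKc.of_isClosed_subset isClosed_frontier
      (frontier_interior_subset.trans hKc.isClosed.frontier_subset)
  have hlevel : ∀ᶠ a in 𝓝 (f m), ∀ x ∈ frontier (interior K), f x < a :=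
    hcompact.eventually_forall_of_forall_eventually fun x hx =>
      (hf.comp continuous_snd).continuousAt.eventually_lt continuous_fst.continuousAt
        (hfrontier x hx)
  obtain ⟨a, ha, haI⟩ :=
    ((hlevel.filter_mono nhdsWithin_le_nhds).and (Ioo_mem_nhdsLT hc)).exists
  exact ⟨interior K, fun x hx => (hKs (interior_subset hx)).1, isOpen_interior, hmU, a, haI, ha⟩

end LocalExtr

/-- A smooth change of the value coordinate: a smooth function `ℝ → ℝ` with everywhere positive
derivative, not required to be onto. -/
structure IsReparametrization (Φ : ℝ → ℝ) : Prop where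
  contDiff : ContDiff ℝ ∞ Φ
  deriv_pos : ∀ t, 0 < deriv Φ t

namespace IsReparametrization

variable {Φ Ψ : ℝ → ℝ}

protected theorem id : IsReparametrization id :=
  ⟨contDiff_id, fun t => by simp⟩

theorem differentiable (hΦ : IsReparametrization Φ) : Differentiable ℝ Φ :=
  hΦ.contDiff.differentiable (by simp)

theorem strictMono (hΦ : IsReparametrization Φ) : StrictMono Φ :=
  strictMono_of_deriv_pos hΦ.deriv_pos

protected theorem comp (hΨ : IsReparametrization Ψ) (hΦ : IsReparametrization Φ) :
    IsReparametrization (Ψ ∘ Φ) where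
  contDiff := hΨ.contDiff.comp hΦ.contDiff
  deriv_pos t := by
    rw [deriv_comp t (hΨ.differentiable _) (hΦ.differentiable t)]
    exact mul_pos (hΨ.deriv_pos _) (hΦ.deriv_pos t)

theorem exists_lift {a b c : ℝ} (hab : a < b) (hbc : b ≤ c) :
    ∃ Φ, IsReparametrization Φ ∧ (∀ t ≤ a, Φ t = t) ∧ (∀ t, t ≤ Φ t) ∧ Φ b = c := by
  let χ : ℝ → ℝ := fun t => Real.smoothTransition ((t - a) / (b - a))
  have hχ : ContDiff ℝ ∞ χ :=
    Real.smoothTransition.contDiff.comp ((contDiff_id.sub contDiff_const).div_const _)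
  have hχ_mono : Monotone χ := fun s t hst =>
    Real.smoothTransition.monotone (by have := sub_pos.2 hab; gcongr)
  have hderiv (t : ℝ) : HasDerivAt (fun t => t + (c - b) * χ t) (1 + (c - b) * deriv χ t) t :=
    (hasDerivAt_id t).add ((hχ.differentiable (by simp) t).hasDerivAt.const_mul _)
  refine ⟨fun t => t + (c - b) * χ t, ⟨contDiff_id.add (contDiff_const.mul hχ), fun t => ?_⟩,
    fun t hta => ?_, fun t => ?_, ?_⟩
  · rw [(hderiv t).deriv]
    linarith [mul_nonneg (sub_nonneg.2 hbc) (hχ_mono.deriv_nonneg (x := t))]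
  · have hχt : χ t = 0 := Real.smoothTransition.zero_of_nonpos
      (div_nonpos_of_nonpos_of_nonneg (sub_nonpos.2 hta) (sub_nonneg.2 hab.le))
    simp [hχt]
  · linarith [mul_nonneg (sub_nonneg.2 hbc) (Real.smoothTransition.nonneg ((t - a) / (b - a)))]
  · have hχb : χ b = 1 := by simp [χ, div_self (sub_pos.2 hab).ne']
    simp [hχb]

end IsReparametrization

/-- `f` is Morse: all its critical points are nondegenerate. -/
def IsMorse (f : ℝ → ℝ) : Prop :=
  ∀ y, deriv f y = 0 → deriv (deriv f) y ≠ 0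

/-- `g` is obtained from `f` by raising it above the level `c` away from its local minima: near each
point `g` is a reparametrization of the values of `f`, which varies with the point and is trivial at
the local minima and where `f ≤ c`. -/
structure IsRaising {X : Type*} [TopologicalSpace X] (c : ℝ) (f g : X → ℝ) : Prop where
  eventuallyEq_comp : ∀ x, ∃ Φ, IsReparametrization Φ ∧ g =ᶠ[𝓝 x] Φ ∘ f
  eventuallyEq : ∀ x, IsLocalMin f x → g =ᶠ[𝓝 x] f
  le : ∀ x, f x ≤ g x
  eq_of_le : ∀ x, f x ≤ c → g x = f x

namespace IsRaising

variable {X Y : Type*} [TopologicalSpace X] [TopologicalSpace Y] {c : ℝ} {f g h : X → ℝ}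

theorem refl (c : ℝ) (f : X → ℝ) : IsRaising c f f where
  eventuallyEq_comp _ := ⟨id, .id, .rfl⟩
  eventuallyEq _ _ := .rfl
  le _ := le_rfl
  eq_of_le _ _ := rfl

theorem isLocalMin_iff (hfg : IsRaising c f g) (x : X) : IsLocalMin g x ↔ IsLocalMin f x := by
  obtain ⟨Φ, hΦ, hg⟩ := hfg.eventuallyEq_comp x
  rw [hg.isLocalMin_iff, isLocalMin_strictMono_comp_iff hΦ.strictMono]

theorem isLocalMax_iff (hfg : IsRaising c f g) (x : X) : IsLocalMax g x ↔ IsLocalMax f x := by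
  obtain ⟨Φ, hΦ, hg⟩ := hfg.eventuallyEq_comp x
  rw [hg.isLocalMax_iff, isLocalMax_strictMono_comp_iff hΦ.strictMono]

theorem isLocalExtr_iff (hfg : IsRaising c f g) (x : X) : IsLocalExtr g x ↔ IsLocalExtr f x :=
  or_congr (hfg.isLocalMin_iff x) (hfg.isLocalMax_iff x)

theorem trans (hfg : IsRaising c f g) (hgh : IsRaising c g h) : IsRaising c f h where
  eventuallyEq_comp x := by
    obtain ⟨Φ, hΦ, hg⟩ := hfg.eventuallyEq_comp x
    obtain ⟨Ψ, hΨ, hh⟩ := hgh.eventuallyEq_comp x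
    exact ⟨Ψ ∘ Φ, hΨ.comp hΦ, hh.trans (hg.fun_comp Ψ)⟩
  eventuallyEq x hx :=
    (hgh.eventuallyEq x ((hfg.isLocalMin_iff x).2 hx)).trans (hfg.eventuallyEq x hx)
  le x := (hfg.le x).trans (hgh.le x)
  eq_of_le x hx := by
    have hgx := hfg.eq_of_le x hx
    rw [hgh.eq_of_le x (hgx.trans_le hx), hgx]

theorem comp_isOpenMap (hfg : IsRaising c f g) {π : Y → X} (hπ : Continuous π)
    (hπo : IsOpenMap π) : IsRaising c (f ∘ π) (g ∘ π) where
  eventuallyEq_comp y := by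
    obtain ⟨Φ, hΦ, hg⟩ := hfg.eventuallyEq_comp (π y)
    exact ⟨Φ, hΦ, hg.comp_tendsto hπ.continuousAt⟩
  eventuallyEq y hy := (hfg.eventuallyEq (π y)
    ((isLocalMin_comp_iff_of_isOpenMap hπ hπo).1 hy)).comp_tendsto hπ.continuousAt
  le y := hfg.le (π y)
  eq_of_le y hy := hfg.eq_of_le (π y) hy

protected theorem continuous (hfg : IsRaising c f g) (hf : Continuous f) : Continuous g := by
  refine continuous_iff_continuousAt.2 fun x => ?_
  obtain ⟨Φ, hΦ, hg⟩ := hfg.eventuallyEq_comp x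
  exact (hΦ.contDiff.continuous.comp hf).continuousAt.congr hg.symm

protected theorem contDiff {E : Type*} [NormedAddCommGroup E] [NormedSpace ℝ E] {f g : E → ℝ}
    (hfg : IsRaising c f g) {n : ℕ∞} (hf : ContDiff ℝ n f) : ContDiff ℝ n g := by
  refine contDiff_iff_contDiffAt.2 fun x => ?_
  obtain ⟨Φ, hΦ, hg⟩ := hfg.eventuallyEq_comp x
  have hΦn : ContDiff ℝ n Φ := hΦ.contDiff.of_le (mod_cast le_top)
  exact (hΦn.comp hf).contDiffAt.congr_of_eventuallyEq hg

protected theorem isMorse {f g : ℝ → ℝ} (hfg : IsRaising c f g) (hf : Differentiable ℝ f)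
    (hMorse : IsMorse f) : IsMorse g := by
  intro y hy
  obtain ⟨Φ, hΦ, hg⟩ := hfg.eventuallyEq_comp y
  have hderiv : deriv g =ᶠ[𝓝 y] fun z => deriv Φ (f z) * deriv f z := by
    filter_upwards [hg.eventuallyEq_nhds] with z hz
    rw [hz.deriv_eq, deriv_comp z (hΦ.differentiable _) (hf z)]
  have hfy : deriv f y = 0 :=
    (mul_eq_zero.1 (hderiv.eq_of_nhds ▸ hy)).resolve_left (hΦ.deriv_pos _).ne'
  have hfy' := hMorse y hfy
  have hΦ' : DifferentiableAt ℝ (fun z => deriv Φ (f z)) y :=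
    ((contDiff_infty_iff_deriv.1 hΦ.contDiff).2.differentiable (by simp) _).comp y (hf y)
  rw [hderiv.deriv_eq, deriv_fun_mul hΦ' (differentiableAt_of_deriv_ne_zero hfy'), hfy, mul_zero,
    zero_add]
  exact mul_ne_zero (hΦ.deriv_pos _).ne' hfy'

theorem piecewise_comp {U : Set X} [DecidablePred (· ∈ U)] (hf : Continuous f) {Φ : ℝ → ℝ}
    (hΦ : IsReparametrization Φ) {a : ℝ} (hΦ_eq : ∀ t ≤ a, Φ t = t) (hΦ_le : ∀ t, t ≤ Φ t)
    (hU : ∀ x ∈ frontier U, f x < a) (hmin : ∀ x ∈ U, ¬ IsLocalMin f x) (hc : c ≤ a) :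
    IsRaising c f (U.piecewise (Φ ∘ f) f) := by
  have hlocal := piecewise_eventuallyEq_of_eventuallyEq_frontier (f := Φ ∘ f) (g := f)
    fun x hx => (hf.continuousAt.eventually_lt continuousAt_const (hU x hx)).mono
      fun y hy => hΦ_eq _ hy.le
  refine ⟨fun x => ?_, fun x hx => ?_, fun x => ?_, fun x hx => ?_⟩
  · exact (hlocal x).elim (fun h => ⟨Φ, hΦ, h.2⟩) (fun h => ⟨id, .id, h⟩)
  · exact (hlocal x).resolve_left fun h => hmin x h.1 hx
  · by_cases hxU : x ∈ U <;> simp [hxU, hΦ_le]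
  · by_cases hxU : x ∈ U <;> simp [hxU, hΦ_eq _ (hx.trans hc)]

end IsRaising

section FiniteExtrema

variable {X : Type*} [TopologicalSpace X] [LocallyCompactSpace X] [T2Space X]
  [∀ x : X, (𝓝[≠] x).NeBot]

theorem exists_isRaising_eq_at_localMax {f : X → ℝ} (hf : Continuous f)
    (hfin : {x | IsLocalExtr f x}.Finite) {m : X} (hm : IsLocalMax f m) {c l : ℝ}
    (hc : c < f m) (hl : f m ≤ l) :
    ∃ g, IsRaising c f g ∧ g m = l ∧ ∀ x ≠ m, IsLocalExtr f x → g x = f x := by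
  classical
  have hiso : ∀ᶠ x in 𝓝[≠] m, ¬ IsLocalExtr f x := nhdsNE_le_cofinite m hfin.compl_mem_cofinite
  have hlt : ∀ᶠ x in 𝓝[≠] m, f x < f m :=
    eventually_lt_of_isLocalMax_of_isolated hm (hiso.mono fun x hx hmax => hx (.inr hmax))
  have hm_not_min : ¬ IsLocalMin f m := fun hmin => by
    obtain ⟨x, hx, hx'⟩ := (hlt.and (hmin.filter_mono nhdsWithin_le_nhds)).exists
    exact hx.not_ge hx'
  obtain ⟨U, hUs, -, hmU, a, ⟨hca, ham⟩, hUa⟩ :=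
    exists_isOpen_frontier_lt_of_eventually_lt hf hlt (eventually_nhdsWithin_iff.1 hiso) hc
  obtain ⟨Φ, hΦ, hΦ_eq, hΦ_le, hΦm⟩ := IsReparametrization.exists_lift ham hl
  have hmin : ∀ x ∈ U, ¬ IsLocalMin f x := fun x hxU hx => by
    obtain rfl | hxm := eq_or_ne x m
    · exact hm_not_min hx
    · exact hUs hxU hxm (.inl hx)
  refine ⟨U.piecewise (Φ ∘ f) f, .piecewise_comp hf hΦ hΦ_eq hΦ_le hUa hmin hca.le, ?_,
    fun x hxm hx => U.piecewise_eq_of_notMem _ _ fun hxU => hUs hxU hxm hx⟩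
  rw [U.piecewise_eq_of_mem _ _ hmU, Function.comp_apply, hΦm]

theorem exists_isRaising_localMax_notMem_Ioo {f : X → ℝ} (hf : Continuous f)
    (hfin : {x | IsLocalExtr f x}.Finite) (c l : ℝ) :
    ∃ g, IsRaising c f g ∧ ∀ x, IsLocalMax g x → g x ∉ Ioo c l := by
  classical
  obtain ⟨s, hs⟩ : ∃ s : Finset X, ∀ x, IsLocalMax f x → f x ∈ Ioo c l → x ∈ s :=
    ⟨hfin.toFinset, fun x hx _ => hfin.mem_toFinset.2 (.inr hx)⟩
  induction s using Finset.induction_on generalizing f with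
  | empty => exact ⟨f, .refl c f, fun x hx hxI => by simpa using hs x hx hxI⟩
  | insert m s _ ih =>
    by_cases hm : IsLocalMax f m ∧ f m ∈ Ioo c l
    · obtain ⟨g, hfg, hgm, hg⟩ := exists_isRaising_eq_at_localMax hf hfin hm.1 hm.2.1 hm.2.2.le
      have hgs : ∀ x, IsLocalMax g x → g x ∈ Ioo c l → x ∈ s := fun x hx hxI => by
        have hxm : x ≠ m := by
          rintro rfl
          exact hxI.2.ne hgm
        have hx' := (hfg.isLocalMax_iff x).1 hx
        exact Finset.mem_of_mem_insert_of_ne (hs x hx' (hg x hxm (.inr hx') ▸ hxI)) hxm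
      obtain ⟨h, hgh, hh⟩ := ih (hfg.continuous hf)
        (by simpa only [hfg.isLocalExtr_iff] using hfin) hgs
      exact ⟨h, hfg.trans hgh, hh⟩
    · refine ih hf hfin fun x hx hxI => Finset.mem_of_mem_insert_of_ne (hs x hx hxI) ?_
      rintro rfl
      exact hm ⟨hx, hxI⟩

end FiniteExtrema

theorem IsMorse.eventually_deriv_ne_zero {f : ℝ → ℝ} (hMorse : IsMorse f)
    (hf : Continuous (deriv f)) (y : ℝ) : ∀ᶠ z in 𝓝[≠] y, deriv f z ≠ 0 := by
  by_cases hy : deriv f y = 0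
  · exact (differentiableAt_of_deriv_ne_zero (hMorse y hy)).hasDerivAt.eventually_ne (hMorse y hy)
  · exact (hf.continuousAt.eventually_ne hy).filter_mono nhdsWithin_le_nhds

theorem IsMorse.finite_localExtr_lift {f : ℝ → ℝ} (hMorse : IsMorse f) (hf : Continuous (deriv f))
    {T : ℝ} (hT : 0 < T) (hper : Function.Periodic f T) :
    {x : AddCircle T | IsLocalExtr hper.lift x}.Finite := by
  have : Fact (0 < T) := ⟨hT⟩
  have hcodiscrete : {y | deriv f y ≠ 0} ∈ codiscreteWithin (Icc 0 (0 + T)) :=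
    codiscreteWithin_mono (subset_univ _)
      (mem_codiscreteWithin_iff_forall_mem_nhdsNE.2 fun y _ =>
        mem_of_superset (hMorse.eventually_deriv_ne_zero hf y) subset_union_left)
  have hcrit : (Icc 0 (0 + T) \ {y | deriv f y ≠ 0}).Finite :=
    isCompact_Icc.finite_sdiff_of_mem_codiscreteWithin hcodiscrete
  refine (hcrit.image ((↑) : ℝ → AddCircle T)).subset fun x hx => ?_
  obtain ⟨y, hyI, rfl⟩ := (AddCircle.coe_image_Icc_eq T 0).ge (mem_univ x)
  have hy : IsLocalExtr f y := (isLocalExtr_comp_iff_of_isOpenMap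
    (AddCircle.continuous_mk' T) QuotientAddGroup.isOpenMap_coe).2 hx
  exact ⟨y, ⟨hyI, not_not.2 hy.deriv_eq_zero⟩, rfl⟩

theorem stmt_18_general {n : ℕ∞} (hn : 1 ≤ n) {T : ℝ} (hT : 0 < T) {V : ℝ → ℝ}
    (hV : ContDiff ℝ n V) (hper : Function.Periodic V T) (hMorse : IsMorse V) (c l : ℝ) :
    ∃ Vt : ℝ → ℝ, ContDiff ℝ n Vt ∧ Function.Periodic Vt T ∧ IsMorse Vt ∧
      (∀ y, IsLocalMin Vt y ↔ IsLocalMin V y) ∧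
      (∀ y, IsLocalMin V y → ∀ᶠ z in 𝓝 y, Vt z = V z) ∧
      (∀ y, V y ≤ Vt y) ∧
      (∀ y, V y ≤ c → Vt y = V y) ∧
      (∀ y, IsLocalMax Vt y → Vt y ∉ Ioo c l) := by
  have : Fact (0 < T) := ⟨hT⟩
  have : Nontrivial (Ico 0 (0 + T)) := nontrivial_coe_sort.2 (Ico_infinite (by simpa)).nontrivial
  have : Nontrivial (AddCircle T) := (AddCircle.equivIco T 0).nontrivial
  have hπ : Continuous ((↑) : ℝ → AddCircle T) := AddCircle.continuous_mk' T
  have hπo : IsOpenMap ((↑) : ℝ → AddCircle T) := QuotientAddGroup.isOpenMap_coe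
  have hn' : (1 : WithTop ℕ∞) ≤ n := mod_cast hn
  have hlift : Continuous (hper.lift : AddCircle T → ℝ) := hV.continuous.quotient_lift _
  obtain ⟨g, hg, hgmax⟩ := exists_isRaising_localMax_notMem_Ioo hlift
    (hMorse.finite_localExtr_lift (hV.continuous_deriv hn') hT hper) c l
  have hVg : IsRaising c V (g ∘ ((↑) : ℝ → AddCircle T)) := hg.comp_isOpenMap hπ hπo
  exact ⟨_, hVg.contDiff hV, fun y => congrArg g (AddCircle.coe_add_period T y),
    hVg.isMorse (hV.differentiable (zero_lt_one.trans_le hn').ne') hMorse, hVg.isLocalMin_iff,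
    hVg.eventuallyEq, hVg.le, hVg.eq_of_le,
    fun y hy => hgmax y ((isLocalMax_comp_iff_of_isOpenMap hπ hπo).1 hy)⟩

/-- potential-modification lemma. For a smooth 2π-periodic Morse
function `V`, energy `λ` and `ν̃ > 0`, there is a smooth 2π-periodic Morse
function `Ṽ` with the same local minima as `V` (agreeing with `V` near them),
`Ṽ ≥ V`, `Ṽ = V` on `K = {V ≤ λ − ν̃²}`, and no local maximum value of `Ṽ`
in `(λ − ν̃², λ)`. -/
theorem stmt_18 (V : ℝ → ℝ) (hV : ContDiff ℝ (⊤ : ℕ∞) V)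
    (hper : Function.Periodic V (2 * Real.pi))
    (hMorse : ∀ y : ℝ, deriv V y = 0 → deriv (deriv V) y ≠ 0)
    (lam ν : ℝ) (hν : 0 < ν) :
    ∃ Vt : ℝ → ℝ, ContDiff ℝ (⊤ : ℕ∞) Vt ∧ Function.Periodic Vt (2 * Real.pi) ∧
      (∀ y : ℝ, deriv Vt y = 0 → deriv (deriv Vt) y ≠ 0) ∧
      (∀ y : ℝ, IsLocalMin Vt y ↔ IsLocalMin V y) ∧
      (∀ y : ℝ, IsLocalMin V y → ∀ᶠ z in nhds y, Vt z = V z) ∧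
      (∀ y : ℝ, V y ≤ Vt y) ∧
      (∀ y : ℝ, V y ≤ lam - ν ^ 2 → Vt y = V y) ∧
      (∀ y : ℝ, IsLocalMax Vt y → Vt y ∉ Set.Ioo (lam - ν ^ 2) lam) :=
  stmt_18_general le_top Real.two_pi_pos hV hper hMorse (lam - ν ^ 2) lam
end
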